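/- arXiv:1005.0729 — 2 statements merged into one kernel-verified Lean document; each statement's English description precedes it below -/
import Mathlib

section
/- Let N ≥ 2 be an integer and K, κ, γ, θ, δ, A be real constants with A > 0 standing for α(N). Let a : ℝ → ℝ be twice continuously differentiable with a(t) > 0, let f : [0,∞) → ℝ be continuously differentiable with f > 0, and set ρ(t,r) = f(r/a(t))/a(t)^N, V(t,r) = (a'(t)/a(t))·r. Then for all t and all r > 0, writing z = r/a(t), the left-hand side of the radial momentum equation satisfies the reduction identity: ρ(V_t + V V_r) + ∂_r(K ρ^γ) − κ ∂_r(ρ^θ)·(((N−1)/r)V + V_r) − κ ρ^θ·(V_rr + ((N−1)/r)V_r − ((N−1)/r²)V) + δ ρ·(A/r^{N−1})·∫₀^r ρ(t,s)s^{N−1} ds = (ρ(t,r)/a(t)^{N−1})·[ a''(t)·a(t)^{N−2}·r + γK·f(z)^{γ−2}·f'(z)/a(t)^{N(γ−2)+2} − κθN·a'(t)·f(z)^{θ−2}·f'(z)/a(t)^{N(θ−2)+3} + (δA/z^{N−1})·∫₀^z f(s)s^{N−1} ds ]. -/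
/-!
Each fluid particle moves along `r = a(t) z` with `z` fixed, so its acceleration is `a'' z`. Because
the velocity is linear in `r`, the second-order viscous term vanishes and only `(ρ^θ)_r` times the
divergence `N a' / a` survives. The mass inside radius `r` depends only on `z = r / a`. The chain
rule for powers of `ρ` then exhibits the factor `ρ / a^(N-1)` in every remaining term.
-/

/-- The density `f(r/a(t))/a(t)^N` obtained by dilating the profile `f` by the factor `a(t)` and
normalising so that its mass in dimension `N` does not depend on `t`. -/
noncomputable def homologousDensity (N : ℕ) (a f : ℝ → ℝ) (t r : ℝ) : ℝ :=
  f (r / a t) / a t ^ N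

/-- The radial velocity `(a'(t)/a(t)) r` of particles moving along `r = a(t) z` with `z` fixed. -/
noncomputable def homologousVelocity (a : ℝ → ℝ) (t r : ℝ) : ℝ :=
  deriv a t / a t * r

section

variable {N : ℕ} {a f : ℝ → ℝ} {t r : ℝ}

theorem deriv_homologousVelocity :
    deriv (homologousVelocity a t) = fun _ ↦ deriv a t / a t :=
  deriv_const_mul_id' (deriv a t / a t)

theorem acceleration_homologousVelocity (ha : DifferentiableAt ℝ a t)
    (ha' : DifferentiableAt ℝ (deriv a) t) (hat : a t ≠ 0) :
    deriv (fun τ ↦ homologousVelocity a τ r) t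
        + homologousVelocity a t r * deriv (homologousVelocity a t) r
      = deriv (deriv a) t / a t * r := by
  have hVt : deriv (fun τ ↦ homologousVelocity a τ r) t
      = (deriv (deriv a) t * a t - deriv a t * deriv a t) / a t ^ 2 * r :=
    ((ha'.hasDerivAt.div ha.hasDerivAt hat).mul_const r).deriv
  rw [hVt, deriv_homologousVelocity, homologousVelocity]
  field_simp
  ring

theorem divergence_homologousVelocity (d : ℝ) (hr : r ≠ 0) :
    (d - 1) / r * homologousVelocity a t r + deriv (homologousVelocity a t) r
      = d * (deriv a t / a t) := by
  rw [deriv_homologousVelocity, homologousVelocity]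
  field_simp
  ring

theorem laplacian_homologousVelocity (d : ℝ) (hr : r ≠ 0) :
    deriv (deriv (homologousVelocity a t)) r
        + (d - 1) / r * deriv (homologousVelocity a t) r
        - (d - 1) / r ^ 2 * homologousVelocity a t r
      = 0 := by
  simp only [deriv_homologousVelocity, deriv_const, homologousVelocity]
  field_simp
  ring

theorem homologousDensity_pos (hat : 0 < a t) (hfz : 0 < f (r / a t)) :
    0 < homologousDensity N a f t r :=
  div_pos hfz (pow_pos hat N)

theorem hasDerivAt_homologousDensity (hf : DifferentiableAt ℝ f (r / a t)) :
    HasDerivAt (homologousDensity N a f t) (deriv f (r / a t) / a t ^ (N + 1)) r :=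
  ((hf.hasDerivAt.comp r ((hasDerivAt_id r).div_const (a t))).div_const (a t ^ N)).congr_deriv
    (by ring)

theorem homologousDensity_rpow (p : ℝ) (hat : 0 ≤ a t) (hfz : 0 ≤ f (r / a t)) :
    homologousDensity N a f t r ^ p = f (r / a t) ^ p / a t ^ (N * p) := by
  rw [homologousDensity, Real.div_rpow hfz (pow_nonneg hat N), Real.rpow_mul hat,
    Real.rpow_natCast]

theorem deriv_homologousDensity_rpow (hN : N ≠ 0) (p : ℝ) (hat : 0 < a t)
    (hf : DifferentiableAt ℝ f (r / a t)) (hfz : 0 < f (r / a t)) :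
    deriv (fun s ↦ homologousDensity N a f t s ^ p) r
      = homologousDensity N a f t r / a t ^ (N - 1)
          * (p * f (r / a t) ^ (p - 2) * deriv f (r / a t) / a t ^ (N * (p - 2) + 2)) := by
  have hρ : 0 < homologousDensity N a f t r := homologousDensity_pos hat hfz
  have hsplit : homologousDensity N a f t r ^ (p - 1)
      = f (r / a t) ^ (p - 2) / a t ^ (N * (p - 2)) * homologousDensity N a f t r := by
    rw [← homologousDensity_rpow _ hat.le hfz.le, ← Real.rpow_add_one hρ.ne']
    ring_nf
  have hpow : a t ^ N = a t ^ (N - 1) * a t := (pow_sub_one_mul hN (a t)).symm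
  rw [((hasDerivAt_homologousDensity hf).rpow_const (Or.inl hρ.ne')).deriv, hsplit, pow_succ,
    hpow, Real.rpow_add hat, Real.rpow_two]
  field_simp

theorem integral_homologousDensity_mul_pow (hN : N ≠ 0) (hat : a t ≠ 0) :
    ∫ s in (0 : ℝ)..r, homologousDensity N a f t s * s ^ (N - 1)
      = ∫ s in (0 : ℝ)..(r / a t), f s * s ^ (N - 1) := by
  have hscale (s : ℝ) : homologousDensity N a f t s * s ^ (N - 1)
      = (a t)⁻¹ * (f (s / a t) * (s / a t) ^ (N - 1)) := by
    rw [homologousDensity, ← pow_sub_one_mul hN (a t), div_pow]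
    field_simp
  simp only [hscale]
  rw [intervalIntegral.integral_const_mul, ← smul_eq_mul,
    intervalIntegral.inv_smul_integral_comp_div (fun z ↦ f z * z ^ (N - 1)), zero_div]

theorem homologous_inertialForce (hN : 2 ≤ N) (hat : a t ≠ 0) (ha : DifferentiableAt ℝ a t)
    (ha' : DifferentiableAt ℝ (deriv a) t) :
    homologousDensity N a f t r
        * (deriv (fun τ ↦ homologousVelocity a τ r) t
          + homologousVelocity a t r * deriv (homologousVelocity a t) r)
      = homologousDensity N a f t r / a t ^ (N - 1)
          * (deriv (deriv a) t * a t ^ (N - 2) * r) := by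
  have hpow : a t ^ (N - 1) = a t ^ (N - 2) * a t := by
    rw [← pow_succ, show N - 2 + 1 = N - 1 by omega]
  rw [acceleration_homologousVelocity ha ha' hat, hpow]
  field_simp

theorem homologous_pressureForce (hN : N ≠ 0) (K γ : ℝ) (hat : 0 < a t)
    (hf : DifferentiableAt ℝ f (r / a t)) (hfz : 0 < f (r / a t)) :
    deriv (fun s ↦ K * homologousDensity N a f t s ^ γ) r
      = homologousDensity N a f t r / a t ^ (N - 1)
          * (γ * K * f (r / a t) ^ (γ - 2) * deriv f (r / a t) / a t ^ (N * (γ - 2) + 2)) := by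
  rw [deriv_const_mul_field, deriv_homologousDensity_rpow hN γ hat hf hfz]
  ring

theorem homologous_viscosityGradientForce (hN : N ≠ 0) (κ θ : ℝ) (hat : 0 < a t)
    (hf : DifferentiableAt ℝ f (r / a t)) (hfz : 0 < f (r / a t)) (hr : r ≠ 0) :
    κ * deriv (fun s ↦ homologousDensity N a f t s ^ θ) r
        * (((N : ℝ) - 1) / r * homologousVelocity a t r + deriv (homologousVelocity a t) r)
      = homologousDensity N a f t r / a t ^ (N - 1)
          * (κ * θ * N * deriv a t * f (r / a t) ^ (θ - 2) * deriv f (r / a t)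
            / a t ^ (N * (θ - 2) + 3)) := by
  have hpow : a t ^ (N * (θ - 2) + 3) = a t ^ (N * (θ - 2) + 2) * a t := by
    rw [← Real.rpow_add_one hat.ne']; ring_nf
  rw [divergence_homologousVelocity _ hr, deriv_homologousDensity_rpow hN θ hat hf hfz, hpow]
  ring

theorem homologous_gravitationalForce (hN : N ≠ 0) (δ A : ℝ) (hat : a t ≠ 0) :
    δ * homologousDensity N a f t r * (A / r ^ (N - 1))
        * ∫ s in (0 : ℝ)..r, homologousDensity N a f t s * s ^ (N - 1)
      = homologousDensity N a f t r / a t ^ (N - 1)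
          * ((δ * A / (r / a t) ^ (N - 1))
            * ∫ s in (0 : ℝ)..(r / a t), f s * s ^ (N - 1)) := by
  rw [integral_homologousDensity_mul_pow hN hat, div_pow]
  field_simp

end

theorem stmt_5_general {N : ℕ} (hN : 2 ≤ N) (K κ γ θ δ A : ℝ) {a f : ℝ → ℝ} {t r : ℝ}
    (ha : ContDiffAt ℝ 2 a t) (hat : 0 < a t) (hr : 0 < r)
    (hf : DifferentiableOn ℝ f (Set.Ici 0)) (hfz : 0 < f (r / a t)) {ρ V : ℝ → ℝ → ℝ}
    (hρ : ∀ t r, ρ t r = f (r / a t) / a t ^ N) (hV : ∀ t r, V t r = deriv a t / a t * r) :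
    ρ t r * (deriv (fun τ ↦ V τ r) t + V t r * deriv (fun s ↦ V t s) r)
        + deriv (fun s ↦ K * ρ t s ^ γ) r
        - κ * deriv (fun s ↦ ρ t s ^ θ) r
            * (((N : ℝ) - 1) / r * V t r + deriv (fun s ↦ V t s) r)
        - κ * ρ t r ^ θ
            * (deriv (deriv (fun s ↦ V t s)) r
              + ((N : ℝ) - 1) / r * deriv (fun s ↦ V t s) r
              - ((N : ℝ) - 1) / r ^ 2 * V t r)
        + δ * ρ t r * (A / r ^ (N - 1)) * ∫ s in (0 : ℝ)..r, ρ t s * s ^ (N - 1)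
      = ρ t r / a t ^ (N - 1) *
          (deriv (deriv a) t * a t ^ (N - 2) * r
            + γ * K * f (r / a t) ^ (γ - 2) * deriv f (r / a t)
                / a t ^ ((N : ℝ) * (γ - 2) + 2)
            - κ * θ * (N : ℝ) * deriv a t * f (r / a t) ^ (θ - 2) * deriv f (r / a t)
                / a t ^ ((N : ℝ) * (θ - 2) + 3)
            + (δ * A / (r / a t) ^ (N - 1))
                * ∫ s in (0 : ℝ)..(r / a t), f s * s ^ (N - 1)) := by
  obtain rfl : ρ = homologousDensity N a f := funext₂ hρ
  obtain rfl : V = homologousVelocity a := funext₂ hV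
  have hN0 : N ≠ 0 := by omega
  have hfd : DifferentiableAt ℝ f (r / a t) :=
    hf.differentiableAt (Ici_mem_nhds (div_pos hr hat))
  have ha' : DifferentiableAt ℝ (deriv a) t :=
    (ha.derivWithin (m := 1) one_add_one_eq_two.le).differentiableAt one_ne_zero
  rw [homologous_inertialForce hN hat.ne' (ha.differentiableAt two_ne_zero) ha',
    homologous_pressureForce hN0 K γ hat hfd hfz,
    homologous_viscosityGradientForce hN0 κ θ hat hfd hfz hr.ne',
    laplacian_homologousVelocity _ hr.ne', homologous_gravitationalForce hN0 δ A hat.ne']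
  ring

/-- Reduction identity for the left-hand side of the radial momentum equation of the
Navier-Stokes-Poisson equations under the separable ansatz
ρ(t,r) = f(r/a(t))/a(t)^N, V(t,r) = (a'(t)/a(t))·r (powers of the positive density
and of a(t) with real exponents are real powers). -/
theorem stmt_5 (N : ℕ) (hN : 2 ≤ N) (K κ γ θ δ A : ℝ) (hA : 0 < A)
    (a : ℝ → ℝ) (ha : ContDiff ℝ 2 a) (hapos : ∀ t, 0 < a t)
    (f : ℝ → ℝ) (hf : ContDiffOn ℝ 1 f (Set.Ici 0))
    (hfpos : ∀ z ∈ Set.Ici (0:ℝ), 0 < f z)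
    (ρ V : ℝ → ℝ → ℝ)
    (hρ : ∀ t r, ρ t r = f (r / a t) / (a t) ^ N)
    (hV : ∀ t r, V t r = (deriv a t / a t) * r) :
    ∀ t : ℝ, ∀ r : ℝ, 0 < r →
      ρ t r * (deriv (fun τ => V τ r) t + V t r * deriv (fun s => V t s) r)
        + deriv (fun s => K * ρ t s ^ γ) r
        - κ * deriv (fun s => ρ t s ^ θ) r
            * (((N : ℝ) - 1) / r * V t r + deriv (fun s => V t s) r)
        - κ * ρ t r ^ θ
            * (deriv (deriv (fun s => V t s)) r
              + ((N : ℝ) - 1) / r * deriv (fun s => V t s) r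
              - ((N : ℝ) - 1) / r ^ 2 * V t r)
        + δ * ρ t r * (A / r ^ (N - 1)) * ∫ s in (0:ℝ)..r, ρ t s * s ^ (N - 1)
      = (ρ t r / (a t) ^ (N - 1)) *
          (deriv (deriv a) t * (a t) ^ (N - 2) * r
            + γ * K * f (r / a t) ^ (γ - 2) * deriv f (r / a t)
                / (a t) ^ ((N : ℝ) * (γ - 2) + 2)
            - κ * θ * (N : ℝ) * deriv a t * f (r / a t) ^ (θ - 2) * deriv f (r / a t)
                / (a t) ^ ((N : ℝ) * (θ - 2) + 3)
            + (δ * A / (r / a t) ^ (N - 1))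
                * ∫ s in (0:ℝ)..(r / a t), f s * s ^ (N - 1)) := by
  intro t r hr
  exact stmt_5_general hN K κ γ θ δ A ha.contDiffAt (hapos t) hr
    (hf.differentiableOn one_ne_zero) (hfpos _ (div_pos hr (hapos t)).le) hρ hV
end

section
/- Let N ≥ 2 be an integer, K, κ, α real constants, δ = 1 or δ = −1, Λ a real constant with δΛ > 0, γ = θ = (2N−2)/N, and let A > 0 stand for α(N). Set λ = √(δAΛ/N). Let Z > 0 and let f : [0,Z) → ℝ be continuously differentiable with f > 0 and f(0) = α > 0, satisfying for all z ∈ (0,Z) the ordinary differential equation (γK − κθ·√(NδAΛ))·f(z)^{γ−2}·f'(z) + (δA/z^{N−1})·∫₀^z f(s)s^{N−1} ds = 0. Define a(t) = e^{λt}, ρ(t,r) = f(r/a(t))/a(t)^N and V(t,r) = λ·r. Then for every t and every r with 0 < r < a(t)·Z, the pair (ρ, V) satisfies both the radial mass equation ρ_t + Vρ_r + ρV_r + ((N−1)/r)ρV = 0 and the radial momentum equation with background constant Λ: ρ(V_t + V V_r) + ∂_r(Kρ^γ) + δρ·(A/r^{N−1})·∫₀^r (ρ(t,s) − Λ)·s^{N−1}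 ds = κ∂_r(ρ^θ)·(((N−1)/r)V + V_r) + κρ^θ·(V_rr + ((N−1)/r)V_r − ((N−1)/r²)V). -/
/-!
In a linear flow `V = H(t) r` with `a' = H a`, mass conservation holds for every dilated profile
`ρ(t, r) = f(r / a) / a ^ N`, the strain `(N - 1) V / r + V_r = N H` is uniform, and the force of
viscosity `μ` is `μ_r N H`: it has the form of a pressure gradient, which is why `γ = θ` lets the
two combine. For `N (2 - γ) = 2` both the pressure gradient and the self-gravity of `ρ`, per unit
mass, scale as `a ^ (-(N - 1))` and balance by the profile equation, while the background
contributes the linear force `δ A Λ r / N`, which equals the acceleration `(H' + H ^ 2) r`. Taking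
`H` to be the constant `√(δ A Λ / N)` gives the theorem.
-/

open Set MeasureTheory

/-- The radial mass equation in dimension `N` at the point `(t, r)`. -/
def RadialMassEquation (N : ℕ) (ρ V : ℝ → ℝ → ℝ) (t r : ℝ) : Prop :=
  deriv (fun τ => ρ τ r) t + V t r * deriv (fun s => ρ t s) r
    + ρ t r * deriv (fun s => V t s) r
    + ((N : ℝ) - 1) / r * (ρ t r * V t r) = 0

/-- The integral of a radial function over the ball of radius `R` in dimension `N`, up to the area
of the unit sphere: it is the source of the Poisson field at distance `R` from the origin. -/
noncomputable def radialIntegral (N : ℕ) (g : ℝ → ℝ) (R : ℝ) : ℝ :=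
  ∫ s in (0 : ℝ)..R, g s * s ^ (N - 1)

/-- The radial momentum equation in dimension `N` at the point `(t, r)`, with pressure `K ρ ^ γ`,
viscosity `κ ρ ^ θ`, background density `Λ`, and the constant `A` standing for `α(N)`. -/
def RadialMomentumEquation (N : ℕ) (K κ δ Λ A γ θ : ℝ) (ρ V : ℝ → ℝ → ℝ) (t r : ℝ) : Prop :=
  ρ t r * (deriv (fun τ => V τ r) t + V t r * deriv (fun s => V t s) r)
      + deriv (fun s => K * ρ t s ^ γ) r
      + δ * ρ t r * (A / r ^ (N - 1)) * radialIntegral N (fun s => ρ t s - Λ) r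
    = κ * deriv (fun s => ρ t s ^ θ) r
          * (((N : ℝ) - 1) / r * V t r + deriv (fun s => V t s) r)
      + κ * ρ t r ^ θ
          * (deriv (deriv (fun s => V t s)) r
            + ((N : ℝ) - 1) / r * deriv (fun s => V t s) r
            - ((N : ℝ) - 1) / r ^ 2 * V t r)

/-- The profile `f` dilated by the factor `b`, normalized so that the total mass in dimension `N`
does not depend on `b`. -/
noncomputable def dilatedDensity (N : ℕ) (f : ℝ → ℝ) (b r : ℝ) : ℝ :=
  f (r / b) / b ^ N

variable {N : ℕ} {f : ℝ → ℝ} {f' b r t γ : ℝ}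

theorem ne_zero_of_mul_eq_two_mul_sub_two (hγ : (N : ℝ) * γ = 2 * N - 2) : N ≠ 0 := by
  rintro rfl
  norm_num at hγ

theorem div_pow_rpow_sub_two {x : ℝ} (hγ : (N : ℝ) * γ = 2 * N - 2) (hx : 0 ≤ x) (hb : 0 < b) :
    (x / b ^ N) ^ (γ - 2) = x ^ (γ - 2) * b ^ 2 := by
  have hexp : (N : ℝ) * (γ - 2) = -(2 : ℕ) := by
    push_cast
    linarith
  rw [Real.div_rpow hx (by positivity), ← Real.rpow_natCast_mul hb.le, hexp,
    Real.rpow_neg hb.le, Real.rpow_natCast, div_inv_eq_mul]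

theorem hasDerivAt_dilatedDensity (hf : HasDerivAt f f' (r / b)) :
    HasDerivAt (dilatedDensity N f b) (f' / b ^ (N + 1)) r := by
  have hscaled : HasDerivAt (fun s => f (s / b)) (f' * (1 / b)) r :=
    hf.comp r ((hasDerivAt_id r).div_const b)
  refine (hscaled.div_const (b ^ N)).congr_deriv ?_
  rw [mul_one_div, div_div, pow_succ']

theorem hasDerivAt_dilatedDensity_scale {a : ℝ → ℝ} {H : ℝ} (ha : HasDerivAt a (H * a t) t)
    (hat : a t ≠ 0) (hf : HasDerivAt f f' (r / a t)) :
    HasDerivAt (fun τ => dilatedDensity N f (a τ) r)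
      (-H * (r * (f' / a t ^ (N + 1)) + N * dilatedDensity N f (a t) r)) t := by
  have hquot : HasDerivAt (fun τ => r / a τ) (-H * (r / a t)) t := by
    refine ((hasDerivAt_const t r).div ha hat).congr_deriv ?_
    field_simp
    ring
  have hpow : HasDerivAt (fun τ => a τ ^ N) (N * H * a t ^ N) t := by
    refine (ha.pow N).congr_deriv ?_
    cases N with
    | zero => simp
    | succ n => simp only [Nat.add_sub_cancel]; ring
  refine ((hf.comp t hquot).div hpow (pow_ne_zero N hat)).congr_deriv ?_
  simp only [Function.comp_apply, dilatedDensity]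
  field_simp
  ring

theorem hasDerivAt_dilatedDensity_rpow (hγ : (N : ℝ) * γ = 2 * N - 2) (hb : 0 < b)
    (hf : HasDerivAt f f' (r / b)) (hpos : 0 < f (r / b)) :
    HasDerivAt (fun s => dilatedDensity N f b s ^ γ)
      (γ * dilatedDensity N f b r * (f (r / b) ^ (γ - 2) * f' / b ^ (N - 1))) r := by
  obtain ⟨n, rfl⟩ := Nat.exists_eq_succ_of_ne_zero (ne_zero_of_mul_eq_two_mul_sub_two hγ)
  have hρ : 0 < dilatedDensity (n + 1) f b r := by
    unfold dilatedDensity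
    positivity
  have hsplit : dilatedDensity (n + 1) f b r ^ (γ - 1)
      = dilatedDensity (n + 1) f b r * (f (r / b) ^ (γ - 2) * b ^ 2) := by
    rw [← div_pow_rpow_sub_two hγ hpos.le hb, ← dilatedDensity, mul_comm,
      ← Real.rpow_add_one hρ.ne']
    ring_nf
  refine ((hasDerivAt_dilatedDensity hf).rpow_const (Or.inl hρ.ne')).congr_deriv ?_
  simp only [hsplit, Nat.succ_eq_add_one, Nat.add_sub_cancel]
  field_simp
  ring

theorem dilatedDensity_mul_pow (hN : N ≠ 0) (hb : b ≠ 0) (s : ℝ) :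
    dilatedDensity N f b s * s ^ (N - 1) = b⁻¹ * (f (s / b) * (s / b) ^ (N - 1)) := by
  obtain ⟨n, rfl⟩ := Nat.exists_eq_succ_of_ne_zero hN
  simp only [dilatedDensity, div_pow, Nat.succ_eq_add_one, Nat.add_sub_cancel]
  field_simp
  ring

theorem radialIntegral_dilatedDensity (hN : N ≠ 0) (hb : b ≠ 0) :
    radialIntegral N (dilatedDensity N f b) r = radialIntegral N f (r / b) := by
  simp only [radialIntegral, dilatedDensity_mul_pow hN hb, intervalIntegral.integral_const_mul,
    intervalIntegral.integral_comp_div (fun s => f s * s ^ (N - 1)) hb, zero_div, smul_eq_mul,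
    inv_mul_cancel_left₀ hb]

theorem intervalIntegrable_dilatedDensity (hN : N ≠ 0) (hb : b ≠ 0)
    (hf : IntervalIntegrable (fun s => f s * s ^ (N - 1)) volume 0 (r / b)) :
    IntervalIntegrable (fun s => dilatedDensity N f b s * s ^ (N - 1)) volume 0 r := by
  simp only [dilatedDensity_mul_pow hN hb]
  refine IntervalIntegrable.const_mul ?_ b⁻¹
  simpa [div_eq_mul_inv, hb] using hf.comp_mul_right (c := b⁻¹)

theorem radialIntegral_sub_const {g : ℝ → ℝ} (hN : N ≠ 0) (Λ : ℝ)
    (hg : IntervalIntegrable (fun s => g s * s ^ (N - 1)) volume 0 r) :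
    radialIntegral N (fun s => g s - Λ) r = radialIntegral N g r - Λ * (r ^ N / N) := by
  obtain ⟨n, rfl⟩ := Nat.exists_eq_succ_of_ne_zero hN
  have hconst : IntervalIntegrable (fun s : ℝ => Λ * s ^ (n + 1 - 1)) volume 0 r :=
    Continuous.intervalIntegrable (by fun_prop) _ _
  simp only [radialIntegral, sub_mul]
  rw [intervalIntegral.integral_sub hg hconst]
  simp [intervalIntegral.integral_const_mul]

theorem poissonForce_dilatedDensity (A Λ : ℝ) (hN : N ≠ 0) (hb : b ≠ 0) (hr : r ≠ 0)
    (hf : IntervalIntegrable (fun s => f s * s ^ (N - 1)) volume 0 (r / b)) :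
    A / r ^ (N - 1) * radialIntegral N (fun s => dilatedDensity N f b s - Λ) r
      = A / (r / b) ^ (N - 1) * radialIntegral N f (r / b) / b ^ (N - 1) - A * Λ / N * r := by
  rw [radialIntegral_sub_const hN Λ (intervalIntegrable_dilatedDensity hN hb hf),
    radialIntegral_dilatedDensity hN hb]
  obtain ⟨n, rfl⟩ := Nat.exists_eq_succ_of_ne_zero hN
  simp only [Nat.succ_eq_add_one, Nat.add_sub_cancel, div_pow, pow_succ]
  field_simp

theorem radialMassEquation_dilatedDensity {a H : ℝ → ℝ} (ha : HasDerivAt a (H t * a t) t)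
    (hat : a t ≠ 0) (hf : DifferentiableAt ℝ f (r / a t)) (hr : r ≠ 0) :
    RadialMassEquation N (fun τ => dilatedDensity N f (a τ)) (fun τ s => H τ * s) t r := by
  have hV : deriv (fun s => H t * s) r = H t := by simp
  rw [RadialMassEquation, (hasDerivAt_dilatedDensity_scale ha hat hf.hasDerivAt).deriv,
    (hasDerivAt_dilatedDensity hf.hasDerivAt).deriv, hV]
  field_simp
  ring

/-- The viscous term `μ (V_rr + …)` vanishes, so viscosity enters only through `∂_r(κ ρ ^ θ)`. -/
theorem radialMomentumEquation_linear_velocity_iff {K κ δ Λ A θ H' : ℝ} {ρ : ℝ → ℝ → ℝ}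
    {H : ℝ → ℝ} (hH : HasDerivAt H H' t) (hr : r ≠ 0) :
    RadialMomentumEquation N K κ δ Λ A γ θ ρ (fun τ s => H τ * s) t r ↔
      ρ t r * ((H' + H t ^ 2) * r) + K * deriv (fun s => ρ t s ^ γ) r
          + ρ t r * (δ * A / r ^ (N - 1) * radialIntegral N (fun s => ρ t s - Λ) r)
        = κ * deriv (fun s => ρ t s ^ θ) r * (N * H t) := by
  have hVt : deriv (fun τ => H τ * r) t = H' * r := (hH.mul_const r).deriv
  have hVr : deriv (fun s => H t * s) = fun _ => H t := by ext; simp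
  have hstrain : ((N : ℝ) - 1) / r * (H t * r) + H t = N * H t := by field_simp; ring
  have hviscous : 0 + ((N : ℝ) - 1) / r * H t - ((N : ℝ) - 1) / r ^ 2 * (H t * r) = 0 := by
    field_simp; ring
  simp only [RadialMomentumEquation, hVt, hVr, hstrain, deriv_const', hviscous,
    deriv_const_mul_field']
  constructor <;> intro h <;> linear_combination h

theorem radialMomentumEquation_dilatedDensity {K κ δ Λ A H' : ℝ} {a H : ℝ → ℝ}
    (hγ : (N : ℝ) * γ = 2 * N - 2) (hat : 0 < a t) (hr : r ≠ 0)
    (hH : HasDerivAt H H' t) (hacc : N * (H' + H t ^ 2) = δ * A * Λ)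
    (hf : DifferentiableAt ℝ f (r / a t)) (hpos : 0 < f (r / a t))
    (hint : IntervalIntegrable (fun s => f s * s ^ (N - 1)) volume 0 (r / a t))
    (hode : (γ * K - κ * γ * (N * H t)) * f (r / a t) ^ (γ - 2) * deriv f (r / a t)
      + δ * A / (r / a t) ^ (N - 1) * radialIntegral N f (r / a t) = 0) :
    RadialMomentumEquation N K κ δ Λ A γ γ
      (fun τ => dilatedDensity N f (a τ)) (fun τ s => H τ * s) t r := by
  have hN := ne_zero_of_mul_eq_two_mul_sub_two hγ
  have hbackground : H' + H t ^ 2 = δ * A * Λ / N := by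
    rw [← hacc]
    field_simp
  rw [radialMomentumEquation_linear_velocity_iff hH hr,
    (hasDerivAt_dilatedDensity_rpow hγ hat hf.hasDerivAt hpos).deriv,
    poissonForce_dilatedDensity _ _ hN hat.ne' hr hint, hbackground]
  linear_combination dilatedDensity N f (a t) r / a t ^ (N - 1) * hode

theorem mul_sqrt_div {c : ℝ} (hc : 0 < c) (x : ℝ) : c * √(x / c) = √(c * x) := by
  rw [show c * x = c ^ 2 * (x / c) by field_simp, Real.sqrt_mul (sq_nonneg c),
    Real.sqrt_sq hc.le]

theorem mul_sq_sqrt_div {c x : ℝ} (hc : 0 < c) (hx : 0 ≤ x) : c * √(x / c) ^ 2 = x := by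
  rw [Real.sq_sqrt (by positivity), mul_div_cancel₀ _ hc.ne']

theorem intervalIntegrable_mul_pow_of_continuousOn_Ico {Z z : ℝ} (n : ℕ)
    (hf : ContinuousOn f (Ico 0 Z)) (hz : z ∈ Ico 0 Z) :
    IntervalIntegrable (fun s => f s * s ^ n) volume 0 z := by
  refine ContinuousOn.intervalIntegrable_of_Icc hz.1 (ContinuousOn.mul ?_ (by fun_prop))
  exact hf.mono (Icc_subset_Ico_right hz.2)

theorem stmt_8_general {K κ δ Λ A θ lam Z : ℝ} (hN : 0 < N)
    (hγ : γ = (2 * (N : ℝ) - 2) / N) (hθ : θ = (2 * (N : ℝ) - 2) / N)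
    (hlam : N * lam ^ 2 = δ * A * Λ) (hf : DifferentiableOn ℝ f (Ioo 0 Z))
    (hint : ∀ z ∈ Ioo 0 Z, IntervalIntegrable (fun s => f s * s ^ (N - 1)) volume 0 z)
    (hpos : ∀ z ∈ Ioo 0 Z, 0 < f z)
    (hode : ∀ z ∈ Ioo 0 Z, (γ * K - κ * θ * (N * lam)) * f z ^ (γ - 2) * deriv f z
      + δ * A / z ^ (N - 1) * radialIntegral N f z = 0)
    {a : ℝ → ℝ} (ha : ∀ t, a t = Real.exp (lam * t)) {ρ V : ℝ → ℝ → ℝ}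
    (hρ : ∀ t r, ρ t r = dilatedDensity N f (a t) r) (hV : ∀ t r, V t r = lam * r)
    (hr : 0 < r) (hrZ : r < a t * Z) :
    RadialMassEquation N ρ V t r ∧ RadialMomentumEquation N K κ δ Λ A γ θ ρ V t r := by
  have hat : 0 < a t := ha t ▸ Real.exp_pos _
  have hz : r / a t ∈ Ioo 0 Z := ⟨div_pos hr hat, (div_lt_iff₀' hat).2 hrZ⟩
  have hfz : DifferentiableAt ℝ f (r / a t) := hf.differentiableAt (isOpen_Ioo.mem_nhds hz)
  have hscale : HasDerivAt a (lam * a t) t := by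
    rw [funext ha]
    simpa [mul_comm] using ((hasDerivAt_id t).const_mul lam).exp
  have hcritical : (N : ℝ) * γ = 2 * N - 2 := by
    rw [hγ, mul_div_cancel₀ _ (by positivity)]
  obtain rfl : θ = γ := hθ.trans hγ.symm
  obtain rfl : ρ = fun τ => dilatedDensity N f (a τ) := funext₂ hρ
  obtain rfl : V = fun _ s => lam * s := funext₂ hV
  exact ⟨radialMassEquation_dilatedDensity (H := fun _ => lam) hscale hat.ne' hfz hr.ne',
    radialMomentumEquation_dilatedDensity hcritical hat hr.ne' (hasDerivAt_const t lam)
      (by rw [zero_add, hlam]) hfz (hpos _ hz) (hint _ hz) (hode _ hz)⟩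

/-- Theorem 1 (2): with background constant Λ satisfying δΛ > 0, γ = θ = (2N−2)/N and
a(t) = e^{√(δα(N)Λ/N)·t}, the separable pair ρ(t,r) = f(r/a(t))/a(t)^N,
V(t,r) = √(δα(N)Λ/N)·r solves the radial mass and momentum equations of the
Navier-Stokes-Poisson system with background, provided f solves the stated ODE. -/
theorem stmt_8 (N : ℕ) (hN : 2 ≤ N) (K κ α δ Λ A γ θ lam Z : ℝ)
    (hδ : δ = 1 ∨ δ = -1) (hδΛ : 0 < δ * Λ) (hA : 0 < A) (hZ : 0 < Z) (hα : 0 < α)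
    (hγ : γ = (2 * (N : ℝ) - 2) / N) (hθ : θ = (2 * (N : ℝ) - 2) / N)
    (hlam : lam = Real.sqrt (δ * A * Λ / N))
    (f : ℝ → ℝ) (hf : ContDiffOn ℝ 1 f (Set.Ico 0 Z))
    (hfpos : ∀ z ∈ Set.Ico (0:ℝ) Z, 0 < f z) (hf0 : f 0 = α)
    (hode : ∀ z ∈ Set.Ioo (0:ℝ) Z,
      (γ * K - κ * θ * Real.sqrt ((N : ℝ) * δ * A * Λ)) * f z ^ (γ - 2) * deriv f z
        + (δ * A / z ^ (N - 1)) * ∫ s in (0:ℝ)..z, f s * s ^ (N - 1) = 0)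
    (a : ℝ → ℝ) (ha : ∀ t, a t = Real.exp (lam * t))
    (ρ V : ℝ → ℝ → ℝ)
    (hρ : ∀ t r, ρ t r = f (r / a t) / (a t) ^ N)
    (hV : ∀ t r, V t r = lam * r) :
    ∀ t : ℝ, ∀ r : ℝ, 0 < r → r < a t * Z →
      (deriv (fun τ => ρ τ r) t + V t r * deriv (fun s => ρ t s) r
          + ρ t r * deriv (fun s => V t s) r
          + ((N : ℝ) - 1) / r * (ρ t r * V t r) = 0)
      ∧ (ρ t r * (deriv (fun τ => V τ r) t + V t r * deriv (fun s => V t s) r)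
          + deriv (fun s => K * ρ t s ^ γ) r
          + δ * ρ t r * (A / r ^ (N - 1))
              * ∫ s in (0:ℝ)..r, (ρ t s - Λ) * s ^ (N - 1)
        = κ * deriv (fun s => ρ t s ^ θ) r
              * (((N : ℝ) - 1) / r * V t r + deriv (fun s => V t s) r)
          + κ * ρ t r ^ θ
              * (deriv (deriv (fun s => V t s)) r
                + ((N : ℝ) - 1) / r * deriv (fun s => V t s) r
                - ((N : ℝ) - 1) / r ^ 2 * V t r)) := by
  intro t r hr hrZ
  have hN0 : (0 : ℝ) < N := by positivity
  have hδAΛ : 0 ≤ δ * A * Λ := by linarith [mul_pos hδΛ hA]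
  have hroot : √((N : ℝ) * δ * A * Λ) = N * lam := by
    rw [hlam, mul_sqrt_div hN0, ← mul_assoc, ← mul_assoc]
  exact stmt_8_general (by positivity) hγ hθ (hlam ▸ mul_sq_sqrt_div hN0 hδAΛ)
    ((hf.differentiableOn one_ne_zero).mono Ioo_subset_Ico_self)
    (fun z hz => intervalIntegrable_mul_pow_of_continuousOn_Ico _ hf.continuousOn
      (Ioo_subset_Ico_self hz))
    (fun z hz => hfpos z (Ioo_subset_Ico_self hz)) (hroot ▸ hode) ha hρ hV hr hrZ
end
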